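/- Let μ be a compactly supported Borel probability measure on ℝ^d and r > 0. If ∫∫ |μ̂(rξ)|² |μ̂(θξ)|² dθ dξ < ∞ (integrating θ over the orthogonal group with Haar probability measure), then there exists θ ∈ O_d(ℝ) such that the support A_{r,θ} of the convolution μ_r * μ^θ has positive Lebesgue measure, with L^d(A_{r,θ}) ≥ 1/∫∫(μ_r * μ^θ)² dx dθ. -/

import Mathlib

open MeasureTheory

noncomputable def fourierMeasure {d : ℕ} (μ : Measure (Fin d → ℝ)) (ξ : Fin d → ℝ) : ℂ :=
  ∫ x, Complex.exp (-(2 * Real.pi * Complex.I * (∑ i, x i * ξ i))) ∂μ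

/-- The support of a measure: points all of whose neighborhoods have positive measure. -/
def measureSupport {α : Type*} [TopologicalSpace α] [MeasurableSpace α] (μ : Measure α) :
    Set α := {x | ∀ U ∈ nhds x, μ U ≠ 0}

/-- The convolution of two measures on `ℝ^d`. -/
noncomputable def measConv {d : ℕ} (μ ν : Measure (Fin d → ℝ)) : Measure (Fin d → ℝ) :=
  Measure.map (fun p : (Fin d → ℝ) × (Fin d → ℝ) => p.1 + p.2) (μ.prod ν)

instance {d : ℕ} : MeasurableSpace (Matrix (Fin d) (Fin d) ℝ) :=
  (inferInstance : MeasurableSpace (Fin d → Fin d → ℝ))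

open scoped FourierTransform SchwartzMap ENNReal Manifold

theorem lintegral_mul_sq_le {α : Type*} [MeasurableSpace α] {μ : Measure α} {f g : α → ℝ≥0∞}
    (hf : AEMeasurable f μ) (hg : AEMeasurable g μ) :
    (∫⁻ a, f a * g a ∂μ) ^ 2 ≤ (∫⁻ a, f a ^ 2 ∂μ) * ∫⁻ a, g a ^ 2 ∂μ := by
  have h := ENNReal.lintegral_mul_le_Lp_mul_Lq μ Real.HolderConjugate.two_two hf hg
  have hsq : ∀ x : ℝ≥0∞, (x ^ (1 / 2 : ℝ)) ^ 2 = x := fun x => by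
    rw [← ENNReal.rpow_natCast, ← ENNReal.rpow_mul]; norm_num
  calc (∫⁻ a, f a * g a ∂μ) ^ 2
      ≤ ((∫⁻ a, f a ^ (2 : ℝ) ∂μ) ^ (1 / 2 : ℝ) * (∫⁻ a, g a ^ (2 : ℝ) ∂μ) ^ (1 / 2 : ℝ)) ^ 2 := by
        gcongr; exact h
    _ = _ := by rw [mul_pow, hsq, hsq]; simp

section Energy

variable {V : Type*} [NormedAddCommGroup V] [InnerProductSpace ℝ V] [FiniteDimensional ℝ V]
  [MeasurableSpace V] [BorelSpace V]

theorem SchwartzMap.lintegral_enorm_sq_fourier (f : 𝓢(V, ℂ)) :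
    ∫⁻ ξ, ‖𝓕 f ξ‖ₑ ^ 2 = ∫⁻ x, ‖f x‖ₑ ^ 2 := by
  have key : ∀ g : 𝓢(V, ℂ), ∫⁻ x, ‖g x‖ₑ ^ 2 = ENNReal.ofReal (∫ x, ‖g x‖ ^ 2) := fun g => by
    rw [ofReal_integral_eq_lintegral_ofReal]
    · exact lintegral_congr fun x => by
        rw [ENNReal.ofReal_pow (norm_nonneg _), ofReal_norm]
    · exact (memLp_two_iff_integrable_sq_norm g.continuous.aestronglyMeasurable).1 (g.memLp 2)
    · exact .of_forall fun x => by positivity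
  rw [key, key, integral_norm_sq_fourier]

theorem integral_schwartz_enorm_sq_le (m : Measure V) [IsFiniteMeasure m] (ψ : 𝓢(V, ℂ)) :
    ‖∫ x, ψ x ∂m‖ₑ ^ 2 ≤ (∫⁻ ξ, ‖∫ x, (𝐞 (-(inner ℝ x ξ)) : ℂ) ∂m‖ₑ ^ 2) * ∫⁻ x, ‖ψ x‖ₑ ^ 2 := by
  set φ := 𝓕⁻ ψ with hφ
  have hψ : ψ = 𝓕 φ := by simp [hφ]
  have hswap := VectorFourier.integral_fourierIntegral_smul_eq_flip (μ := m) (ν := volume)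
    (L := innerₗ V) (e := 𝐞) (f := fun _ => (1 : ℂ)) (g := φ) Real.continuous_fourierChar
    continuous_inner (integrable_const _) φ.integrable
  have hflip : ∀ x, VectorFourier.fourierIntegral 𝐞 volume (innerₗ V).flip φ x = ψ x := fun x => by
    rw [hψ, SchwartzMap.fourier_coe, flip_innerₗ]; rfl
  have hhat : ∀ ξ, VectorFourier.fourierIntegral 𝐞 m (innerₗ V) (fun _ => (1 : ℂ)) ξ =
      ∫ x, (𝐞 (-(inner ℝ x ξ)) : ℂ) ∂m := fun ξ => by
    simp [VectorFourier.fourierIntegral, Circle.smul_def]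
  have hcont := VectorFourier.fourierIntegral_continuous (μ := m) (L := innerₗ V) (e := 𝐞)
    (f := fun _ => (1 : ℂ)) Real.continuous_fourierChar continuous_inner (integrable_const _)
  simp only [hflip, one_smul] at hswap
  rw [← hswap]
  calc _ ≤ (∫⁻ ξ, ‖∫ x, (𝐞 (-(inner ℝ x ξ)) : ℂ) ∂m‖ₑ * ‖φ ξ‖ₑ) ^ 2 := by
        gcongr
        refine (enorm_integral_le_lintegral_enorm _).trans_eq (lintegral_congr fun ξ => ?_)
        rw [enorm_smul, hhat]
    _ ≤ _ := by
        refine (lintegral_mul_sq_le ?_ φ.continuous.enorm.aemeasurable).trans_eq ?_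
        · simpa only [← hhat] using hcont.enorm.aemeasurable
        · rw [hψ, SchwartzMap.lintegral_enorm_sq_fourier]

theorem measure_sq_le_of_isCompact_subset_isOpen (m : Measure V) [IsFiniteMeasure m] {C U : Set V}
    (hC : IsCompact C) (hU : IsOpen U) (hCU : C ⊆ U) :
    m C ^ 2 ≤ (∫⁻ ξ, ‖∫ x, (𝐞 (-(inner ℝ x ξ)) : ℂ) ∂m‖ₑ ^ 2) * volume U := by
  set W := U ∩ Metric.thickening 1 C
  have hW : IsOpen W := hU.inter Metric.isOpen_thickening
  have hCW : C ⊆ W := Set.subset_inter hCU (Metric.self_subset_thickening one_pos C)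
  obtain ⟨f, hf0, hf1, hf⟩ := exists_contMDiffMap_zero_one_of_isClosed (n := ⊤) 𝓘(ℝ, V)
    hW.isClosed_compl hC.isClosed (Set.disjoint_compl_left_iff_subset.2 hCW)
  have hcs : HasCompactSupport f := by
    refine HasCompactSupport.intro (K := Metric.cthickening 1 C) hC.cthickening fun x hx => ?_
    exact hf0 fun hxW => hx (Metric.thickening_subset_cthickening _ _ hxW.2)
  have hcs' : HasCompactSupport (fun x => (f x : ℂ)) := hcs.comp_left (g := Complex.ofReal) rfl
  have hsm : ContDiff ℝ ((⊤ : ℕ∞) : WithTop ℕ∞) (fun x => (f x : ℂ)) :=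
    Complex.ofRealCLM.contDiff.comp f.contMDiff.contDiff
  set ψ := hcs'.toSchwartzMap hsm
  have hψ : ∀ x, ψ x = (f x : ℂ) := fun x => rfl
  have hint : m C ≤ ‖∫ x, ψ x ∂m‖ₑ := by
    have hfi : Integrable f m := f.contMDiff.continuous.integrable_of_hasCompactSupport hcs
    have : ∫ x, ψ x ∂m = ((∫ x, f x ∂m : ℝ) : ℂ) := by
      simp only [hψ]; exact integral_ofReal
    rw [this, ← ofReal_norm, Complex.norm_real, Real.norm_of_nonneg
      (integral_nonneg fun x => (hf x).1), ofReal_integral_eq_lintegral_ofReal hfi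
      (.of_forall fun x => (hf x).1), ← lintegral_indicator_one hC.measurableSet]
    refine lintegral_mono fun x => ?_
    by_cases hx : x ∈ C
    · simp [hx, hf1 hx]
    · simp [hx]
  have hL2 : ∫⁻ x, ‖ψ x‖ₑ ^ 2 ≤ volume U := by
    rw [← lintegral_indicator_one hU.measurableSet]
    refine lintegral_mono fun x => ?_
    by_cases hx : x ∈ U
    · simp only [hx, Set.indicator_of_mem, Pi.one_apply, hψ]
      refine pow_le_one' ?_ 2
      rw [← ofReal_norm, Complex.norm_real, Real.norm_of_nonneg (hf x).1]
      exact ENNReal.ofReal_le_one.2 (hf x).2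
    · have : f x = 0 := hf0 fun h => hx h.1
      simp [hψ, this]
  calc m C ^ 2 ≤ ‖∫ x, ψ x ∂m‖ₑ ^ 2 := by gcongr
    _ ≤ _ := integral_schwartz_enorm_sq_le m ψ
    _ ≤ _ := by gcongr

theorem absolutelyContinuous_of_lintegral_fourier_sq_lt_top (m : Measure V) [IsFiniteMeasure m]
    (h : ∫⁻ ξ, ‖∫ x, (𝐞 (-(inner ℝ x ξ)) : ℂ) ∂m‖ₑ ^ 2 < ∞) : m ≪ volume := by
  refine Measure.AbsolutelyContinuous.mk fun s hs h0 => ?_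
  rw [hs.measure_eq_iSup_isCompact]
  simp only [ENNReal.iSup_eq_zero]
  intro C hCs hC
  have hC0 : volume C = 0 := measure_mono_null hCs h0
  by_contra hne
  have hpos : volume C < m C ^ 2 / ∫⁻ ξ, ‖∫ x, (𝐞 (-(inner ℝ x ξ)) : ℂ) ∂m‖ₑ ^ 2 := by
    rw [hC0]
    exact ENNReal.div_pos (pow_ne_zero 2 hne) h.ne
  obtain ⟨U, hCU, hU, hlt⟩ := C.exists_isOpen_lt_of_lt _ hpos
  exact (ENNReal.mul_lt_of_lt_div' hlt).not_ge
    (measure_sq_le_of_isCompact_subset_isOpen m hC hU hCU)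

end Energy

section FourierMeasure

variable {d : ℕ}

theorem absolutelyContinuous_of_lintegral_fourierMeasure_sq_lt_top (m : Measure (Fin d → ℝ))
    [IsFiniteMeasure m] (h : ∫⁻ ξ, ‖fourierMeasure m ξ‖ₑ ^ 2 < ∞) : m ≪ volume := by
  have hto : Measurable (WithLp.toLp 2 : (Fin d → ℝ) → EuclideanSpace ℝ (Fin d)) :=
    (PiLp.volume_preserving_toLp (Fin d)).measurable
  have hof : Measurable (WithLp.ofLp : EuclideanSpace ℝ (Fin d) → (Fin d → ℝ)) :=
    (PiLp.volume_preserving_ofLp (Fin d)).measurable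
  have hhat : ∀ ξ : EuclideanSpace ℝ (Fin d),
      ∫ x, (Real.fourierChar (-(inner ℝ x ξ)) : ℂ) ∂(m.map (WithLp.toLp 2)) =
        fourierMeasure m (WithLp.ofLp ξ) := fun ξ => by
    rw [integral_map hto.aemeasurable (by fun_prop), fourierMeasure]
    refine integral_congr_ae (.of_forall fun x => ?_)
    simp only [Real.fourierChar_apply, PiLp.inner_apply]
    congr 1
    push_cast
    simp only [RCLike.inner_apply, conj_trivial, Complex.ofReal_mul, mul_comm]
    ring
  have hac := absolutelyContinuous_of_lintegral_fourier_sq_lt_top (m.map (WithLp.toLp 2)) (by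
    simp only [hhat]
    rwa [(PiLp.volume_preserving_ofLp (Fin d)).lintegral_comp_emb
      (MeasurableEquiv.toLp 2 (Fin d → ℝ)).symm.measurableEmbedding
      (fun ξ => ‖fourierMeasure m ξ‖ₑ ^ 2)])
  have hac' := hac.map hof
  rw [(PiLp.volume_preserving_ofLp (Fin d)).map_eq, Measure.map_map hof hto] at hac'
  simpa [Function.comp_def] using hac'

theorem continuous_fourierKernel (ξ : Fin d → ℝ) : Continuous fun x : Fin d → ℝ =>
    Complex.exp (-(2 * Real.pi * Complex.I * (∑ i, x i * ξ i : ℝ))) := by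
  fun_prop

theorem continuous_fourierMeasure (μ : Measure (Fin d → ℝ)) [IsFiniteMeasure μ] :
    Continuous (fourierMeasure μ) := by
  refine continuous_of_dominated (bound := fun _ => 1)
    (fun ξ => (continuous_fourierKernel ξ).aestronglyMeasurable)
    (fun ξ => .of_forall fun x => ?_) (integrable_const _) (.of_forall fun x => by fun_prop)
  rw [Complex.norm_exp]
  simp

theorem fourierMeasure_measConv (μ ν : Measure (Fin d → ℝ)) [IsFiniteMeasure μ]
    [IsFiniteMeasure ν] (ξ : Fin d → ℝ) :
    fourierMeasure (measConv μ ν) ξ = fourierMeasure μ ξ * fourierMeasure ν ξ := by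
  rw [fourierMeasure, measConv, integral_map (by fun_prop)
    (continuous_fourierKernel ξ).aestronglyMeasurable, fourierMeasure,
    fourierMeasure, ← integral_prod_mul]
  refine integral_congr_ae (.of_forall fun p => ?_)
  simp only [← Complex.exp_add]
  congr 1
  simp only [Pi.add_apply, Complex.ofReal_add, add_mul, Finset.sum_add_distrib]
  ring

theorem fourierMeasure_map_smul (μ : Measure (Fin d → ℝ)) (r : ℝ) (ξ : Fin d → ℝ) :
    fourierMeasure (μ.map fun x => r • x) ξ = fourierMeasure μ (r • ξ) := by
  rw [fourierMeasure, integral_map (by fun_prop)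
    (continuous_fourierKernel ξ).aestronglyMeasurable, fourierMeasure]
  simp only [Pi.smul_apply, smul_eq_mul, mul_left_comm, mul_assoc]

theorem measurable_mulVec (A : Matrix (Fin d) (Fin d) ℝ) :
    Measurable fun x : Fin d → ℝ => A.mulVec x :=
  (continuous_const.matrix_mulVec continuous_id).measurable

theorem fourierMeasure_map_mulVec (μ : Measure (Fin d → ℝ)) (A : Matrix (Fin d) (Fin d) ℝ)
    (ξ : Fin d → ℝ) :
    fourierMeasure (μ.map fun x => A.mulVec x) ξ = fourierMeasure μ (A.transpose.mulVec ξ) := by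
  rw [fourierMeasure, integral_map (measurable_mulVec A).aemeasurable
    (continuous_fourierKernel ξ).aestronglyMeasurable, fourierMeasure]
  refine integral_congr_ae (.of_forall fun x => ?_)
  have h : A.mulVec x ⬝ᵥ ξ = x ⬝ᵥ A.transpose.mulVec ξ := by
    rw [Matrix.mulVec_transpose, dotProduct_comm, Matrix.dotProduct_mulVec, dotProduct_comm]
  simp only [dotProduct] at h
  simp only [h]

end FourierMeasure

section Support

theorem measureSupport_eq_support {α : Type*} [TopologicalSpace α] [MeasurableSpace α]
    (m : Measure α) : measureSupport m = m.support := by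
  ext x
  simp [measureSupport, Measure.mem_support_iff_forall, pos_iff_ne_zero]

theorem one_le_volume_measureSupport_mul {d : ℕ} (m : Measure (Fin d → ℝ))
    [IsProbabilityMeasure m] (hm : m ≪ volume) :
    1 ≤ volume (measureSupport m) * ∫⁻ x, m.rnDeriv volume x ^ 2 := by
  have hS : MeasurableSet (measureSupport m) := by
    rw [measureSupport_eq_support]; exact Measure.isClosed_support.measurableSet
  have h1 : m (measureSupport m) = 1 := by
    rw [prob_compl_eq_zero_iff hS |>.symm, measureSupport_eq_support]
    exact Measure.measure_compl_support
  rw [← Measure.setLIntegral_rnDeriv hm, ← lintegral_indicator hS] at h1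
  have hcs := lintegral_mul_sq_le (μ := volume)
    (f := (measureSupport m).indicator fun _ => 1) (aemeasurable_const.indicator hS)
    (Measure.measurable_rnDeriv m volume).aemeasurable
  have e1 : ∀ x, (measureSupport m).indicator (fun _ => (1 : ℝ≥0∞)) x * m.rnDeriv volume x =
      (measureSupport m).indicator (fun x => m.rnDeriv volume x) x := fun x => by
    by_cases hx : x ∈ measureSupport m <;> simp [hx]
  have e2 : ∀ x, (measureSupport m).indicator (fun _ => (1 : ℝ≥0∞)) x ^ 2 =
      (measureSupport m).indicator 1 x := fun x => by
    by_cases hx : x ∈ measureSupport m <;> simp [hx]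
  simp only [e1, e2, lintegral_indicator_one hS] at hcs
  rwa [h1, one_pow] at hcs

end Support

section Rotations

variable {d : ℕ}

instance : BorelSpace (Matrix (Fin d) (Fin d) ℝ) :=
  inferInstanceAs (BorelSpace (Fin d → Fin d → ℝ))

instance : SecondCountableTopology (Matrix (Fin d) (Fin d) ℝ) :=
  inferInstanceAs (SecondCountableTopology (Fin d → Fin d → ℝ))

instance : SecondCountableTopology (Matrix.orthogonalGroup (Fin d) ℝ) :=
  TopologicalSpace.Subtype.secondCountableTopology _

theorem measConv_map_map (μ : Measure (Fin d → ℝ)) [SFinite μ] {f g : (Fin d → ℝ) → (Fin d → ℝ)}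
    (hf : Measurable f) (hg : Measurable g) :
    measConv (μ.map f) (μ.map g) = (μ.prod μ).map fun p => f p.1 + g p.2 := by
  rw [measConv, Measure.map_prod_map _ _ hf hg, Measure.map_map (by fun_prop) (by fun_prop)]
  rfl

theorem measurable_orthogonalGroup_mulVec :
    Measurable fun p : Matrix.orthogonalGroup (Fin d) ℝ × (Fin d → ℝ) =>
      (p.1 : Matrix (Fin d) (Fin d) ℝ).mulVec p.2 :=
  ((continuous_subtype_val.comp continuous_fst).matrix_mulVec continuous_snd).measurable

theorem measurable_measConv_mulVec (μ : Measure (Fin d → ℝ)) [SFinite μ] (r : ℝ) :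
    Measurable fun θ : Matrix.orthogonalGroup (Fin d) ℝ =>
      measConv (μ.map fun x => r • x)
        (μ.map fun x => (θ : Matrix (Fin d) (Fin d) ℝ).mulVec x) := by
  simp only [measConv_map_map μ (measurable_const_smul r) (measurable_mulVec _)]
  refine Measure.measurable_of_measurable_coe _ fun s hs => ?_
  have hF : Measurable fun q : Matrix.orthogonalGroup (Fin d) ℝ × (Fin d → ℝ) × (Fin d → ℝ) =>
      r • q.2.1 + (q.1 : Matrix (Fin d) (Fin d) ℝ).mulVec q.2.2 :=
    (measurable_snd.fst.const_smul r).add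
      (measurable_orthogonalGroup_mulVec.comp (measurable_fst.prodMk measurable_snd.snd))
  convert! measurable_measure_prodMk_left (ν := μ.prod μ) (hF hs) using 2 with θ
  exact Measure.map_apply (hF.comp measurable_prodMk_left) hs

theorem aemeasurable_lintegral_rnDeriv_sq {α : Type*} [MeasurableSpace α] {ν : Measure α}
    {m : α → Measure (Fin d → ℝ)} (hm : Measurable m) [∀ a, IsProbabilityMeasure (m a)]
    (hac : ∀ᵐ a ∂ν, m a ≪ volume) :
    AEMeasurable (fun a => ∫⁻ x, (m a).rnDeriv volume x ^ 2) ν := by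
  let τ : Measure (Fin d → ℝ) := Measure.toFinite volume
  let κ : ProbabilityTheory.Kernel α (Fin d → ℝ) := ⟨m, hm⟩
  have : ProbabilityTheory.IsMarkovKernel κ :=
    ⟨fun a => inferInstanceAs (IsProbabilityMeasure (m a))⟩
  let η : ProbabilityTheory.Kernel α (Fin d → ℝ) := .const α τ
  have hvτ : (volume : Measure (Fin d → ℝ)) ≪ τ := absolutelyContinuous_toFinite _
  refine ⟨fun a => ∫⁻ x, (ProbabilityTheory.Kernel.rnDeriv κ η a x * τ.rnDeriv volume x) ^ 2,
    ?_, ?_⟩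
  · exact Measurable.lintegral_prod_right' (f := fun p : α × (Fin d → ℝ) =>
      (ProbabilityTheory.Kernel.rnDeriv κ η p.1 p.2 * τ.rnDeriv volume p.2) ^ 2)
      (((ProbabilityTheory.Kernel.measurable_rnDeriv κ η).mul
        ((Measure.measurable_rnDeriv τ volume).comp measurable_snd)).pow_const 2)
  · filter_upwards [hac] with a ha
    refine lintegral_congr_ae ?_
    have h1 : ProbabilityTheory.Kernel.rnDeriv κ η a =ᵐ[volume] (m a).rnDeriv τ :=
      hvτ.ae_le (ProbabilityTheory.Kernel.rnDeriv_eq_rnDeriv_measure (κ := κ) (η := η))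
    filter_upwards [h1, Measure.rnDeriv_mul_rnDeriv (κ := volume) (ha.trans hvτ)] with x hx1 hx2
    rw [hx1, ← hx2, Pi.mul_apply]

theorem measurable_lintegral_fourierMeasure_mulVec (μ : Measure (Fin d → ℝ)) [IsFiniteMeasure μ]
    (r : ℝ) :
    Measurable fun θ : Matrix.orthogonalGroup (Fin d) ℝ => ∫⁻ ξ : Fin d → ℝ,
      ENNReal.ofReal (‖fourierMeasure μ (r • ξ)‖ ^ 2 *
        ‖fourierMeasure μ ((θ : Matrix (Fin d) (Fin d) ℝ).mulVec ξ)‖ ^ 2) := by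
  have hμ := (continuous_fourierMeasure μ).measurable
  have h1 := (hμ.comp (measurable_snd.const_smul r :
    Measurable fun p : Matrix.orthogonalGroup (Fin d) ℝ × (Fin d → ℝ) => r • p.2)).norm.pow_const 2
  have h2 := (hμ.comp (measurable_orthogonalGroup_mulVec (d := d))).norm.pow_const 2
  exact Measurable.lintegral_prod_right' (h1.mul h2).ennreal_ofReal

theorem measConv_mulVec_absolutelyContinuous (μ : Measure (Fin d → ℝ)) [IsFiniteMeasure μ]
    (r : ℝ) (A : Matrix (Fin d) (Fin d) ℝ)
    (h : ∫⁻ ξ : Fin d → ℝ, ENNReal.ofReal (‖fourierMeasure μ (r • ξ)‖ ^ 2 *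
        ‖fourierMeasure μ (A.transpose.mulVec ξ)‖ ^ 2) < ∞) :
    measConv (μ.map fun x => r • x) (μ.map fun x => A.mulVec x) ≪ volume := by
  have : IsFiniteMeasure (measConv (μ.map fun x => r • x) (μ.map fun x => A.mulVec x)) := by
    unfold measConv; infer_instance
  refine absolutelyContinuous_of_lintegral_fourierMeasure_sq_lt_top _ ?_
  refine lt_of_eq_of_lt (lintegral_congr fun ξ => ?_) h
  rw [fourierMeasure_measConv, fourierMeasure_map_smul, fourierMeasure_map_mulVec, enorm_mul,
    mul_pow, ENNReal.ofReal_mul (by positivity), ENNReal.ofReal_pow (norm_nonneg _),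
    ENNReal.ofReal_pow (norm_nonneg _), ofReal_norm, ofReal_norm]

end Rotations

theorem exists_rotation_support_positive_measure {d : ℕ} (hd : 1 ≤ d)
    (μ : Measure (Fin d → ℝ)) [IsProbabilityMeasure μ]
    (K : Set (Fin d → ℝ)) (hK : IsCompact K) (hμK : μ Kᶜ = 0)
    (r : ℝ) (hr : 0 < r)
    -- `ν` is the normalized Haar measure on the orthogonal group
    (ν : Measure (Matrix.orthogonalGroup (Fin d) ℝ)) [IsProbabilityMeasure ν]
    (hHaar : ∀ g₀ : Matrix.orthogonalGroup (Fin d) ℝ,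
      Measure.map (fun g => g₀ * g) ν = ν)
    (hfin : (∫⁻ θ : Matrix.orthogonalGroup (Fin d) ℝ, ∫⁻ ξ : Fin d → ℝ,
        ENNReal.ofReal (‖fourierMeasure μ (r • ξ)‖ ^ 2 *
          ‖fourierMeasure μ ((θ : Matrix (Fin d) (Fin d) ℝ).mulVec ξ)‖ ^ 2)
        ∂volume ∂ν) < ⊤) :
    ∃ θ : Matrix.orthogonalGroup (Fin d) ℝ,
      0 < volume (measureSupport (measConv (Measure.map (fun x => r • x) μ)
          (Measure.map (fun x => (θ : Matrix (Fin d) (Fin d) ℝ).mulVec x) μ))) ∧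
      1 ≤ volume (measureSupport (measConv (Measure.map (fun x => r • x) μ)
          (Measure.map (fun x => (θ : Matrix (Fin d) (Fin d) ℝ).mulVec x) μ))) *
        ∫⁻ θ' : Matrix.orthogonalGroup (Fin d) ℝ, ∫⁻ x : Fin d → ℝ,
          ((measConv (Measure.map (fun x => r • x) μ)
            (Measure.map (fun x => (θ' : Matrix (Fin d) (Fin d) ℝ).mulVec x) μ)).rnDeriv
              volume x) ^ 2 ∂volume ∂ν := by
  have : ν.IsMulLeftInvariant := ⟨hHaar⟩
  have hprob : ∀ θ : Matrix.orthogonalGroup (Fin d) ℝ, IsProbabilityMeasure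
      (measConv (Measure.map (fun x => r • x) μ)
        (Measure.map (fun x => (θ : Matrix (Fin d) (Fin d) ℝ).mulVec x) μ)) := fun θ => by
    have := Measure.isProbabilityMeasure_map (μ := μ)
      (measurable_const_smul r : Measurable fun x : Fin d → ℝ => r • x).aemeasurable
    have := Measure.isProbabilityMeasure_map (μ := μ)
      (measurable_mulVec (θ : Matrix (Fin d) (Fin d) ℝ)).aemeasurable
    exact Measure.isProbabilityMeasure_map (by fun_prop)
  have hac : ∀ᵐ θ : Matrix.orthogonalGroup (Fin d) ℝ ∂ν,
      measConv (Measure.map (fun x => r • x) μ)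
        (Measure.map (fun x => (θ : Matrix (Fin d) (Fin d) ℝ).mulVec x) μ) ≪ volume := by
    have h := ae_lt_top (measurable_lintegral_fourierMeasure_mulVec μ r) hfin.ne
    filter_upwards [(quasiMeasurePreserving_inv ν).ae h] with θ hθ
    exact measConv_mulVec_absolutelyContinuous μ r θ hθ
  obtain ⟨θ, hθ, hle⟩ := exists_notMem_null_le_lintegral
    (aemeasurable_lintegral_rnDeriv_sq (measurable_measConv_mulVec μ r) hac) (ae_iff.1 hac)
  have hone := one_le_volume_measureSupport_mul _ (not_not.1 hθ)
  refine ⟨θ, pos_iff_ne_zero.2 fun h0 => ?_, hone.trans (by gcongr)⟩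
  rw [h0, zero_mul] at hone
  exact absurd hone (by simp)
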